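/- arXiv:math/0012202 — 5 statements merged into one kernel-verified Lean document; each statement's English description precedes it below -/
import Mathlib

section
/- The set Γ₆^bil = Γ₆^♮ ∪ ζΓ₆^♮ is a subgroup of Sp(4,ℤ); in particular Γ₆^♮ is a subgroup of Sp(4,ℤ), the matrix ζ lies in Sp(4,ℤ), satisfies ζ² = I₄, and normalizes Γ₆^♮ (i.e. ζ·Γ₆^♮·ζ⁻¹ = Γ₆^♮). -/
open Matrix Polynomial

/-- 4×4 integer matrices. -/
abbrev M4 : Type := Matrix (Fin 4) (Fin 4) ℤ

/-- The standard symplectic form matrix J = [[0, I₂], [−I₂, 0]]. -/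
def J4 : M4 := !![0,0,1,0; 0,0,0,1; -1,0,0,0; 0,-1,0,0]

/-- Sp(4,ℤ): integer matrices γ with ᵗγ·J·γ = J. -/
def Sp4Z : Set M4 := {γ | γᵀ * J4 * γ = J4}

/-- The congruence pattern [[6,1,6,6],[6,6,6,36],[6,1,6,6],[1,1,1,6]]. -/
def pat6 : Matrix (Fin 4) (Fin 4) ℤ := !![6,1,6,6; 6,6,6,36; 6,1,6,6; 1,1,1,6]

/-- Γ₆^♮: elements of Sp(4,ℤ) with γ − I₄ entrywise in the pattern. -/
def Gamma6nat : Set M4 := {γ | γ ∈ Sp4Z ∧ ∀ i j, pat6 i j ∣ (γ - 1) i j}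

/-- ζ = diag(−1,1,−1,1). -/
def zetaM : M4 := !![-1,0,0,0; 0,1,0,0; 0,0,-1,0; 0,0,0,1]

/-- Γ₆^bil = Γ₆^♮ ∪ ζ·Γ₆^♮. -/
def Gamma6bil : Set M4 := Gamma6nat ∪ (fun γ => zetaM * γ) '' Gamma6nat

/-!
Matrices divisible entrywise by a pattern `p` with `p i j ∣ p i k * p k j` form a non-unital
subalgebra `I`, so the matrices congruent to `1` modulo `p` are those of `1 + I`. Matrices are
integral over the ground ring, hence the inverse of an invertible `u` is a polynomial in `u`; as
`u⁻¹ - 1 = -(u - 1) * u⁻¹`, the invertible elements of `1 + I` are closed under inversion whatever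
the relation between `p` and the symplectic form. A diagonal matrix only rescales the entries, so
conjugation by `ζ` preserves `1 + I`, and a subgroup `H` normalized by an involution `ζ` has
`H ∪ ζ H` as its join with `⟨ζ⟩`.
-/

open scoped nonZeroDivisors

section Monoid

variable {M : Type*} [Monoid M] {S : Set M} {z : M}

/-- `S` is a group for the multiplication of `M` with the same unit, encoded as being the image in
`M` of a subgroup of `Mˣ`. -/
def IsGroupOfUnits (S : Set M) : Prop :=
  ∃ H : Subgroup Mˣ, (H.ofUnits : Set M) = S

namespace IsGroupOfUnits

theorem one_mem (hS : IsGroupOfUnits S) : 1 ∈ S := by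
  obtain ⟨H, rfl⟩ := hS
  exact H.ofUnits.one_mem

theorem mul_mem (hS : IsGroupOfUnits S) {x y : M} (hx : x ∈ S) (hy : y ∈ S) : x * y ∈ S := by
  obtain ⟨H, rfl⟩ := hS
  exact H.ofUnits.mul_mem hx hy

theorem exists_inverse (hS : IsGroupOfUnits S) {x : M} (hx : x ∈ S) :
    ∃ y ∈ S, x * y = 1 ∧ y * x = 1 := by
  obtain ⟨H, rfl⟩ := hS
  obtain ⟨u, hu, rfl⟩ := hx
  exact ⟨↑u⁻¹, ⟨u⁻¹, H.inv_mem hu, rfl⟩, u.mul_inv, u.inv_mul⟩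

end IsGroupOfUnits

theorem image_conj_eq_of_mul_self_eq_one (hz : z * z = 1) (hconj : ∀ x ∈ S, z * x * z ∈ S) :
    (fun x ↦ z * x * z) '' S = S := by
  refine Set.Subset.antisymm (Set.image_subset_iff.2 hconj) fun x hx ↦ ⟨_, hconj x hx, ?_⟩
  calc z * (z * x * z) * z = (z * z) * x * (z * z) := by simp only [mul_assoc]
    _ = x := by rw [hz, one_mul, mul_one]

theorem coe_sup_zpowers_of_mul_self_mem {G : Type*} [Group G] {H : Subgroup G} {g : G}
    (hg : g ∈ Subgroup.normalizer (H : Set G)) (hgg : g * g ∈ H) :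
    ((H ⊔ Subgroup.zpowers g : Subgroup G) : Set G) = (H : Set G) ∪ (fun h ↦ g * h) '' H := by
  rw [sup_comm, Subgroup.coe_mul_of_left_le_normalizer_right _ _ (by simpa using hg)]
  refine Set.Subset.antisymm ?_ (Set.union_subset ?_ ?_)
  · rintro _ ⟨_, ⟨k, rfl⟩, h, hh, rfl⟩
    have heven (m : ℤ) : g ^ (2 * m) ∈ H := by
      rw [_root_.zpow_mul, zpow_two]
      exact H.zpow_mem hgg m
    rcases Int.even_or_odd' k with ⟨m, rfl | rfl⟩
    · exact Or.inl (H.mul_mem (heven m) hh)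
    · refine Or.inr ⟨_, H.mul_mem (heven m) hh, ?_⟩
      simp only [← mul_assoc, add_comm, _root_.zpow_one_add]
  · exact fun h hh ↦ ⟨1, one_mem _, h, hh, one_mul h⟩
  · rintro _ ⟨h, hh, rfl⟩
    exact ⟨g, Subgroup.mem_zpowers g, h, hh, rfl⟩

theorem IsGroupOfUnits.union_image_mul_left (hS : IsGroupOfUnits S) (hz : z * z = 1)
    (hconj : ∀ x ∈ S, z * x * z ∈ S) : IsGroupOfUnits (S ∪ (fun x ↦ z * x) '' S) := by
  obtain ⟨H, rfl⟩ := hS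
  let g : Mˣ := ⟨z, z, hz, hz⟩
  have hg : g ∈ Subgroup.normalizer (H : Set Mˣ) := by
    refine Subgroup.mem_normalizer_iff_conj_image_eq.2 ?_
    exact image_conj_eq_of_mul_self_eq_one (z := g) (Units.ext hz) fun u hu ↦
      H.mem_of_mem_val_ofUnits (hconj u ⟨u, hu, rfl⟩)
  have hgg : g * g ∈ H := (Units.ext hz : g * g = 1) ▸ H.one_mem
  refine ⟨H ⊔ Subgroup.zpowers g, ?_⟩
  change Units.val '' ((H ⊔ Subgroup.zpowers g : Subgroup Mˣ) : Set Mˣ) = _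
  rw [coe_sup_zpowers_of_mul_self_mem hg hgg, Set.image_union, Set.image_image]
  congr 1
  exact (Set.image_image (fun x ↦ z * x) Units.val (H : Set Mˣ)).symm

end Monoid

section Integral

variable {R A : Type*} [CommRing R] [Ring A] [Algebra R A]

theorem units_inv_mem_adjoin_of_isIntegral {u : Aˣ} (hu : IsIntegral R (↑u⁻¹ : A)) :
    (↑u⁻¹ : A) ∈ Algebra.adjoin R {(u : A)} := by
  obtain ⟨p, hp, hroot⟩ := hu
  set n := p.natDegree
  have hmonom (i : ℕ) (hi : i ≤ n) : (↑(u ^ n * u⁻¹ ^ i) : A) ∈ Algebra.adjoin R {(u : A)} := by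
    rw [inv_pow, ← pow_sub u hi, Units.val_pow_eq_pow_val]
    exact pow_mem (Algebra.self_mem_adjoin_singleton R _) _
  have htop : (↑u⁻¹ : A) ^ n = -∑ i ∈ Finset.range n, p.coeff i • (↑u⁻¹ : A) ^ i := by
    rw [← aeval_def, hp.as_sum] at hroot
    simpa [← Algebra.smul_def, ← eq_neg_iff_add_eq_zero] using hroot
  have hinv : (↑u⁻¹ : A) = -∑ i ∈ Finset.range n, p.coeff i • (↑(u ^ n * u⁻¹ ^ (i + 1)) : A) :=
    calc (↑u⁻¹ : A) = (u : A) ^ n * (↑u⁻¹ : A) ^ n * ↑u⁻¹ := by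
          norm_cast
          simp
      _ = _ := by
          rw [htop, mul_neg, neg_mul, Finset.mul_sum, Finset.sum_mul]
          simp only [mul_smul_comm, smul_mul_assoc, pow_succ, mul_assoc, Units.val_mul,
            Units.val_pow_eq_pow_val]
  rw [hinv]
  exact neg_mem (sum_mem fun i hi ↦ Subalgebra.smul_mem _ (hmonom _ (Finset.mem_range.1 hi)) _)

theorem mul_mem_of_mem_adjoin_of_sub_one_mem {I : NonUnitalSubalgebra R A} {u x y : A}
    (hu : u - 1 ∈ I) (hx : x ∈ I) (hy : y ∈ Algebra.adjoin R {u}) : x * y ∈ I := by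
  induction hy using Algebra.adjoin_induction generalizing x with
  | mem y hy =>
    obtain rfl := Set.mem_singleton_iff.1 hy
    simpa only [mul_sub, mul_one, sub_add_cancel] using add_mem (mul_mem hx hu) hx
  | algebraMap r =>
    simpa only [← Algebra.commutes, ← Algebra.smul_def] using SMulMemClass.smul_mem r hx
  | add y z _ _ hy hz => simpa only [mul_add] using add_mem (hy hx) (hz hx)
  | mul y z _ _ hy hz => simpa only [mul_assoc] using hz (hy hx)

variable [Algebra.IsIntegral R A]

/-- The group of units congruent to `1` modulo the non-unital subalgebra `I`. -/
def congruenceUnits (I : NonUnitalSubalgebra R A) : Subgroup Aˣ where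
  carrier := {u | (u : A) - 1 ∈ I}
  one_mem' := by simp
  mul_mem' {u v} hu hv := by
    have h : ((u * v : Aˣ) : A) - 1 = (u - 1) * (v - 1) + (u - 1) + (v - 1) := by
      push_cast
      noncomm_ring
    rw [Set.mem_ofPred_eq, h]
    exact add_mem (add_mem (mul_mem hu hv) hu) hv
  inv_mem' {u} hu := by
    have h : (↑u⁻¹ : A) - 1 = -((u - 1) * ↑u⁻¹) := by rw [sub_mul, u.mul_inv, one_mul, neg_sub]
    rw [Set.mem_ofPred_eq, h]
    exact neg_mem (mul_mem_of_mem_adjoin_of_sub_one_mem hu hu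
      (units_inv_mem_adjoin_of_isIntegral (Algebra.IsIntegral.isIntegral _)))

theorem IsGroupOfUnits.sep_sub_one_mem {S : Set A} (hS : IsGroupOfUnits S)
    (I : NonUnitalSubalgebra R A) : IsGroupOfUnits {x | x ∈ S ∧ x - 1 ∈ I} := by
  obtain ⟨H, rfl⟩ := hS
  refine ⟨H ⊓ congruenceUnits I, Set.ext fun x ↦ ⟨?_, ?_⟩⟩
  · rintro ⟨u, ⟨hH, hI⟩, rfl⟩
    exact ⟨⟨u, hH, rfl⟩, hI⟩
  · rintro ⟨⟨u, hH, rfl⟩, hI⟩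
    exact ⟨u, ⟨hH, hI⟩, rfl⟩

end Integral

section Matrix

variable {n R : Type*} [Fintype n] [CommRing R] {J p D E N γ : Matrix n n R}

/-- The non-unital algebra of matrices whose entries are divisible by those of the pattern `p`. -/
def patternSubalgebra (p : Matrix n n R) (hp : ∀ i k j, p i j ∣ p i k * p k j) :
    NonUnitalSubalgebra R (Matrix n n R) where
  carrier := {N | ∀ i j, p i j ∣ N i j}
  zero_mem' _ _ := dvd_zero _
  add_mem' hN hN' i j := dvd_add (hN i j) (hN' i j)
  smul_mem' r _ hN i j := (hN i j).mul_left r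
  mul_mem' hN hN' i j := Finset.dvd_sum fun k _ ↦
    (hp i k j).trans (mul_dvd_mul (hN i k) (hN' k j))

theorem dvd_isDiag_mul_mul_isDiag (hD : D.IsDiag) (hE : E.IsDiag) (hN : ∀ i j, p i j ∣ N i j)
    (i j : n) : p i j ∣ (D * N * E) i j := by
  classical
  rw [← hD.diagonal_diag, ← hE.diagonal_diag, mul_diagonal, diagonal_mul]
  exact ((hN i j).mul_left _).mul_right _

variable [DecidableEq n]

/-- The matrices preserving the bilinear form with Gram matrix `J`; its carrier is
`Sp(4,ℤ)` for `J = J4`. -/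
def isometries (J : Matrix n n R) : Submonoid (Matrix n n R) where
  carrier := {γ | γᵀ * J * γ = J}
  one_mem' := by simp
  mul_mem' {γ δ} hγ hδ := by
    calc (γ * δ)ᵀ * J * (γ * δ) = δᵀ * (γᵀ * J * γ) * δ := by
          simp only [transpose_mul, Matrix.mul_assoc]
      _ = J := by rw [hγ, hδ]

theorem isUnit_of_mem_isometries (hJ : J.det ∈ R⁰) (hγ : γ ∈ isometries J) : IsUnit γ := by
  have hdet : (γ.det * γ.det) * J.det = 1 * J.det :=
    calc (γ.det * γ.det) * J.det = (γᵀ * J * γ).det := by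
          rw [det_mul, det_mul, det_transpose]; ring
      _ = 1 * J.det := by rw [hγ, one_mul]
  have hdet_sq : γ.det * γ.det = 1 := (mul_cancel_right_mem_nonZeroDivisors hJ).1 hdet
  exact (isUnit_iff_isUnit_det γ).2 (.of_mul_eq_one _ hdet_sq)

theorem inv_mem_isometries {g : GL n R} (hg : (g : Matrix n n R) ∈ isometries J) :
    (↑g⁻¹ : Matrix n n R) ∈ isometries J := by
  have hT : (↑g⁻¹ : Matrix n n R)ᵀ * (g : Matrix n n R)ᵀ = 1 := by
    rw [← transpose_mul, g.mul_inv, transpose_one]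
  calc (↑g⁻¹ : Matrix n n R)ᵀ * J * ↑g⁻¹
      = (↑g⁻¹ : Matrix n n R)ᵀ * ((g : Matrix n n R)ᵀ * J * g) * ↑g⁻¹ := by rw [hg]
    _ = ((↑g⁻¹ : Matrix n n R)ᵀ * (g : Matrix n n R)ᵀ) * J * (g * ↑g⁻¹) := by
        simp only [mul_assoc]
    _ = J := by rw [hT, g.mul_inv, one_mul, mul_one]

theorem isGroupOfUnits_isometries (hJ : J.det ∈ R⁰) :
    IsGroupOfUnits (isometries J : Set (Matrix n n R)) := by
  refine ⟨(isometries J).units, Set.Subset.antisymm (isometries J).ofUnits_units_le ?_⟩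
  intro γ hγ
  obtain ⟨g, rfl⟩ := isUnit_of_mem_isometries hJ hγ
  exact ⟨g, ⟨hγ, inv_mem_isometries hγ⟩, rfl⟩

/-- The isometries of `J` congruent to `1` modulo the pattern `p`: the group `Γ₆^♮` for
`J = J4` and `p = pat6`. -/
def congruentIsometries (J p : Matrix n n R) : Set (Matrix n n R) :=
  {γ | γ ∈ isometries J ∧ ∀ i j, p i j ∣ (γ - 1) i j}

theorem isGroupOfUnits_congruentIsometries (hJ : J.det ∈ R⁰)
    (hp : ∀ i k j, p i j ∣ p i k * p k j) : IsGroupOfUnits (congruentIsometries J p) :=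
  (isGroupOfUnits_isometries hJ).sep_sub_one_mem (patternSubalgebra p hp)

theorem conj_mem_congruentIsometries (hD : D.IsDiag) (hDJ : D ∈ isometries J) (hDD : D * D = 1)
    (hγ : γ ∈ congruentIsometries J p) : D * γ * D ∈ congruentIsometries J p := by
  refine ⟨mul_mem (mul_mem hDJ hγ.1) hDJ, ?_⟩
  have h : D * γ * D - 1 = D * (γ - 1) * D := by rw [mul_sub, sub_mul, mul_one, hDD]
  rw [h]
  exact dvd_isDiag_mul_mul_isDiag hD hD hγ.2

theorem bilevel_is_subgroup_general (hJ : J.det ∈ R⁰) (hp : ∀ i k j, p i j ∣ p i k * p k j)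
    (hD : D.IsDiag) (hDJ : D ∈ isometries J) (hDD : D * D = 1) :
    IsGroupOfUnits (congruentIsometries J p) ∧
    IsGroupOfUnits (congruentIsometries J p ∪ (fun γ ↦ D * γ) '' congruentIsometries J p) ∧
    congruentIsometries J p ∪ (fun γ ↦ D * γ) '' congruentIsometries J p ⊆ isometries J ∧
    (fun γ ↦ D * γ * D) '' congruentIsometries J p = congruentIsometries J p := by
  have hgroup := isGroupOfUnits_congruentIsometries hJ hp
  have hconj : ∀ γ ∈ congruentIsometries J p, D * γ * D ∈ congruentIsometries J p :=
    fun _ ↦ conj_mem_congruentIsometries hD hDJ hDD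
  refine ⟨hgroup, hgroup.union_image_mul_left hDD hconj, Set.union_subset (fun _ hγ ↦ hγ.1) ?_,
    image_conj_eq_of_mul_self_eq_one hDD hconj⟩
  exact Set.image_subset_iff.2 fun _ hγ ↦ mul_mem hDJ hγ.1

end Matrix

theorem det_J4 : J4.det = 1 := by
  decide

theorem pat6_dvd_mul (i k j : Fin 4) : pat6 i j ∣ pat6 i k * pat6 k j := by
  decide +revert

theorem zetaM_eq_diagonal : zetaM = diagonal ![-1, 1, -1, 1] := by
  decide

theorem zetaM_mem_Sp4Z : zetaM ∈ Sp4Z := by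
  change zetaMᵀ * J4 * zetaM = J4
  decide

theorem zetaM_mul_self : zetaM * zetaM = 1 := by
  decide

/-- Γ₆^bil = Γ₆^♮ ∪ ζΓ₆^♮ is a subgroup of Sp(4,ℤ); in particular Γ₆^♮ is a
subgroup of Sp(4,ℤ), ζ ∈ Sp(4,ℤ), ζ² = I₄, and ζ normalizes Γ₆^♮. -/
theorem bilevel_is_subgroup :
    Gamma6bil ⊆ Sp4Z ∧
    (1 : M4) ∈ Gamma6bil ∧
    (∀ γ δ : M4, γ ∈ Gamma6bil → δ ∈ Gamma6bil → γ * δ ∈ Gamma6bil) ∧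
    (∀ γ ∈ Gamma6bil, ∃ δ ∈ Gamma6bil, γ * δ = 1 ∧ δ * γ = 1) ∧
    Gamma6nat ⊆ Sp4Z ∧
    (1 : M4) ∈ Gamma6nat ∧
    (∀ γ δ : M4, γ ∈ Gamma6nat → δ ∈ Gamma6nat → γ * δ ∈ Gamma6nat) ∧
    (∀ γ ∈ Gamma6nat, ∃ δ ∈ Gamma6nat, γ * δ = 1 ∧ δ * γ = 1) ∧
    zetaM ∈ Sp4Z ∧
    zetaM * zetaM = 1 ∧
    (fun γ => zetaM * γ * zetaM) '' Gamma6nat = Gamma6nat := by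
  obtain ⟨hnat, hbil, hsub, hconj⟩ := bilevel_is_subgroup_general (J := J4) (p := pat6)
    (by simp [det_J4]) pat6_dvd_mul (zetaM_eq_diagonal ▸ isDiag_diagonal _) zetaM_mem_Sp4Z
    zetaM_mul_self
  exact ⟨hsub, hbil.one_mem, fun _ _ ↦ hbil.mul_mem, fun _ ↦ hbil.exists_inverse,
    fun _ hγ ↦ hγ.1, hnat.one_mem, fun _ _ ↦ hnat.mul_mem, fun _ ↦ hnat.exists_inverse,
    zetaM_mem_Sp4Z, zetaM_mul_self, hconj⟩
end

section
/- For every γ ∈ Γ₆^♮, the characteristic polynomial det(γ − x·I₄) ∈ ℤ[x] is congruent to (1 − x)⁴ modulo 6; that is, every coefficient of det(γ − x·I₄) − (1 − x)⁴ is divisible by 6. -/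
open Matrix Polynomial

/-!
Only the off-diagonal positions (0,1), (2,1), (3,0), (3,1), (3,2) are unconstrained modulo 6.
Ordering the basis so that e₃ comes first, then e₀ and e₂, then e₁, puts all of them strictly above
the diagonal blocks, which are congruent to identity matrices. So modulo 6 the matrix has the same
characteristic polynomial as the identity.
-/

section BlockUnitriangular

variable {R m α : Type*} [DecidableEq m]

/-- Block upper triangular matrices with identity diagonal blocks, the blocks being the fibres of
`b`; over a linear order they have the characteristic polynomial of the identity. As in
`Matrix.BlockTriangular`, the entries with `b i < b j` are the unconstrained ones. -/
def IsBlockUnitriangular [Zero R] [One R] [LE α] (M : Matrix m m R) (b : m → α) : Prop :=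
  ∀ ⦃i j⦄, b j ≤ b i → M i j = (1 : Matrix m m R) i j

variable {M : Matrix m m R} {b : m → α}

namespace IsBlockUnitriangular

theorem blockTriangular [Zero R] [One R] [Preorder α] (hM : IsBlockUnitriangular M b) :
    M.BlockTriangular b := by
  intro i j hij
  have hne : i ≠ j := by
    rintro rfl
    exact lt_irrefl _ hij
  rw [hM hij.le, one_apply_ne hne]

theorem toSquareBlock_eq_one [Zero R] [One R] [Preorder α] (hM : IsBlockUnitriangular M b)
    (a : α) : M.toSquareBlock b a = 1 := by
  ext i j
  rw [toSquareBlock_def, of_apply, hM (j.2.trans i.2.symm).le]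
  simp only [one_apply, Subtype.ext_iff]

theorem charpoly_eq [CommRing R] [Fintype m] [LinearOrder α] (hM : IsBlockUnitriangular M b) :
    M.charpoly = (X - 1) ^ Fintype.card m := by
  calc M.charpoly
      = ∏ a ∈ Finset.univ.image b, (X - 1) ^ Fintype.card {i // b i = a} := by
        simp only [hM.blockTriangular.charpoly, hM.toSquareBlock_eq_one, charpoly_one]
    _ = (X - 1) ^ ∑ a ∈ Finset.univ.image b, Fintype.card {i // b i = a} :=
        Finset.prod_pow_eq_pow_sum _ _ _
    _ = (X - 1) ^ Fintype.card m := by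
        simp only [Fintype.card_subtype, ← Finset.card_eq_sum_card_image, Finset.card_univ]

end IsBlockUnitriangular

variable [CommRing R]

theorem isBlockUnitriangular_map_quotient_mk_iff [LE α] {I : Ideal R} :
    IsBlockUnitriangular (M.map (Ideal.Quotient.mk I)) b ↔
      ∀ ⦃i j⦄, b j ≤ b i → (M - 1) i j ∈ I := by
  have map_one_apply (i j : m) :
      Ideal.Quotient.mk I ((1 : Matrix m m R) i j) = (1 : Matrix m m (R ⧸ I)) i j := by
    simp only [one_apply, apply_ite (Ideal.Quotient.mk I), map_one, map_zero]
  simp only [IsBlockUnitriangular, map_apply, ← map_one_apply, Ideal.Quotient.mk_eq_mk_iff_sub_mem,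
    Matrix.sub_apply]

theorem det_map_C_sub_X_smul_one [Fintype m] (M : Matrix m m R) :
    det (M.map C - (X : R[X]) • (1 : Matrix m m R[X])) =
      (-1) ^ Fintype.card m * M.charpoly := by
  rw [charpoly, charmatrix, ← det_neg, neg_sub, scalar_apply, smul_one_eq_diagonal,
    RingHom.mapMatrix_apply]

theorem charpoly_congruent_mod_six_general [Fintype m] [LinearOrder α] (M : Matrix m m R)
    (b : m → α) (d : R) (hM : ∀ ⦃i j⦄, b j ≤ b i → d ∣ (M - 1) i j) (n : ℕ) :
    d ∣ (det (M.map C - (X : R[X]) • (1 : Matrix m m R[X])) -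
      (1 - X) ^ Fintype.card m).coeff n := by
  let π := Ideal.Quotient.mk (Ideal.span {d})
  have unitriangular : IsBlockUnitriangular (M.map π) b :=
    isBlockUnitriangular_map_quotient_mk_iff.2 fun _ _ hij =>
      Ideal.mem_span_singleton.2 (hM hij)
  have charpoly_mod : M.charpoly.map π = (X - 1) ^ Fintype.card m := by
    rw [← charpoly_map, unitriangular.charpoly_eq]
  have difference_mod : (det (M.map C - (X : R[X]) • (1 : Matrix m m R[X])) -
      (1 - X) ^ Fintype.card m).map π = 0 := by
    simp only [det_map_C_sub_X_smul_one, Polynomial.map_sub, Polynomial.map_mul,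
      Polynomial.map_pow, Polynomial.map_neg, Polynomial.map_one, Polynomial.map_X, charpoly_mod]
    rw [← mul_pow, neg_one_mul, neg_sub, sub_self]
  rw [← Ideal.mem_span_singleton, ← Ideal.Quotient.eq_zero_iff_mem, ← coeff_map,
    difference_mod, coeff_zero]

end BlockUnitriangular

/-- The level of each basis vector in the order e₃ < e₀, e₂ < e₁, which makes every matrix congruent
to `1` along the pattern `pat6` block unitriangular modulo 6. -/
def pat6Level : Fin 4 → ℕ := ![1, 2, 1, 0]

theorem six_dvd_pat6_of_pat6Level_le :
    ∀ i j, pat6Level j ≤ pat6Level i → 6 ∣ pat6 i j := by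
  simp only [Int.dvd_iff_emod_eq_zero]
  decide

/-- For γ ∈ Γ₆^♮, the characteristic polynomial det(γ − x·I₄) is congruent to
(1 − x)⁴ modulo 6: every coefficient of the difference is divisible by 6. -/
theorem charpoly_congruent_mod_six (γ : M4) (hγ : γ ∈ Gamma6nat) (n : ℕ) :
    (6 : ℤ) ∣
      (Matrix.det (γ.map (Polynomial.C) -
          (Polynomial.X : ℤ[X]) • (1 : Matrix (Fin 4) (Fin 4) ℤ[X])) -
        (1 - Polynomial.X) ^ 4).coeff n := by
  exact charpoly_congruent_mod_six_general γ pat6Level 6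
    (fun i j hij => (six_dvd_pat6_of_pat6Level_le i j hij).trans (hγ.2 i j)) n
end

section
/- The group Γ₆^♮ is neat: if γ ∈ Γ₆^♮ and λ ∈ ℂ is an eigenvalue of γ (i.e. a root of the characteristic polynomial det(γ − x·I₄)) which is a root of unity, then λ = 1. -/
open Matrix Polynomial

/-!
If `μ` is an eigenvalue of `γ - 1` with `γ ∈ Γ₆^♮`, then `μ / √6` is an algebraic integer:
conjugating `γ - 1` by `diag(√6, 6, √6, 1)` makes every entry a multiple of `√6`.
On the other hand, if `ζ ≠ 1` has finite order divisible by the prime `p`, then `ζ - 1` divides `p`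
in the algebraic integers. For an eigenvalue `ζ` of `γ` this would give `6 ∣ p²`, which is absurd.
-/

section Integrality

variable {R n : Type*} [CommRing R]

lemma isIntegral_of_mulVec_eq_smul {A : Type*} [CommRing A] [IsDomain A] [Algebra R A] [Fintype n]
    {M : Matrix n n A} (hM : ∀ i j, IsIntegral R (M i j)) {v : n → A} (hv : v ≠ 0) {μ : A}
    (h : M *ᵥ v = μ • v) : IsIntegral R μ := by
  let S := integralClosure R A
  let N : Submodule S A := Submodule.span S (Set.range v)
  have hN : N ≠ ⊥ := by
    obtain ⟨i, hi⟩ := Function.ne_iff.mp hv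
    exact N.ne_bot_iff.mpr ⟨v i, Submodule.subset_span ⟨i, rfl⟩, hi⟩
  have hμv : ∀ i, μ • v i ∈ N := fun i ↦ by
    rw [← Pi.smul_apply, ← h]
    exact N.sum_mem fun j _ ↦
      N.smul_mem (⟨M i j, hM i j⟩ : S) (Submodule.subset_span ⟨j, rfl⟩)
  have hμN : ∀ x ∈ N, μ • x ∈ N := fun x hx ↦ by
    induction hx using Submodule.span_induction with
    | mem x hx => obtain ⟨i, rfl⟩ := hx; exact hμv i
    | zero => rw [smul_zero]; exact N.zero_mem
    | add x y _ _ hx hy => rw [smul_add]; exact N.add_mem hx hy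
    | smul a x _ hx => rw [smul_comm]; exact N.smul_mem a hx
  exact isIntegral_trans (A := S) μ <|
    isIntegral_of_smul_mem_submodule N hN (Submodule.fg_span (Set.finite_range v)) μ hμN

variable {K : Type*} [Field K] [Algebra R K]

-- With `D = diag(s ^ w)`, the matrix `s⁻¹ D⁻¹ N D` is integral and `D⁻¹ v` is an eigenvector of it.
lemma isIntegral_div_of_isIntegral_weighted [Fintype n] {N : Matrix n n K} {s : K} (hs : s ≠ 0)
    (w : n → ℕ) (hN : ∀ i j, IsIntegral R (N i j * s ^ w j / s ^ (w i + 1)))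
    {v : n → K} (hv : v ≠ 0) {μ : K} (h : N *ᵥ v = μ • v) :
    IsIntegral R (μ / s) := by
  refine isIntegral_of_mulVec_eq_smul (M := .of fun i j ↦ N i j * s ^ w j / s ^ (w i + 1)) hN
    (v := fun i ↦ v i / s ^ w i) ?_ ?_
  · obtain ⟨i, hi⟩ := Function.ne_iff.mp hv
    exact Function.ne_iff.mpr ⟨i, div_ne_zero hi (pow_ne_zero _ hs)⟩
  · ext i
    calc ∑ j, N i j * s ^ w j / s ^ (w i + 1) * (v j / s ^ w j)
        = (∑ j, N i j * v j) / s ^ (w i + 1) := by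
          rw [Finset.sum_div]
          refine Finset.sum_congr rfl fun j _ ↦ ?_
          field_simp
      _ = μ * v i / s ^ (w i + 1) := congrArg (· / s ^ (w i + 1)) (congrFun h i)
      _ = μ / s * (v i / s ^ w i) := by rw [pow_succ', mul_div_mul_comm]

-- `h` is the square of the divisibility of `x * s ^ b` by `s ^ a`, which makes sense in `R`.
lemma isIntegral_mul_pow_div_pow_of_dvd {m x : R} {s : K} (hs : s ^ 2 = algebraMap R K m)
    (hs0 : s ≠ 0) {a b : ℕ} (h : m ^ a ∣ x ^ 2 * m ^ b) :
    IsIntegral R (algebraMap R K x * s ^ b / s ^ a) := by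
  obtain ⟨c, hc⟩ := h
  have hsq : (algebraMap R K x * s ^ b / s ^ a) ^ 2 = algebraMap R K c := by
    rw [div_pow, mul_pow, pow_right_comm s b, pow_right_comm s a, hs,
      div_eq_iff (pow_ne_zero a (hs ▸ pow_ne_zero 2 hs0))]
    simpa only [map_mul, map_pow, mul_comm] using congrArg (algebraMap R K) hc
  exact .of_pow two_pos (hsq ▸ isIntegral_algebraMap)

lemma isIntegral_sq_div_of_weighted_dvd [Fintype n] {m : R} (hm : algebraMap R K m ≠ 0)
    (w : n → ℕ) {N : Matrix n n R} (hN : ∀ i j, m ^ (w i + 1) ∣ N i j ^ 2 * m ^ w j)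
    {v : n → K} (hv : v ≠ 0) {μ : K} (h : N.map (algebraMap R K) *ᵥ v = μ • v) :
    IsIntegral R (μ ^ 2 / algebraMap R K m) := by
  let φ := algebraMap K (AlgebraicClosure K)
  have hφ (x : R) : φ (algebraMap R K x) = algebraMap R (AlgebraicClosure K) x :=
    (IsScalarTower.algebraMap_apply R K (AlgebraicClosure K) x).symm
  obtain ⟨s, hs⟩ := IsAlgClosed.exists_pow_nat_eq (φ (algebraMap R K m)) two_pos
  have hs0 : s ≠ 0 := by
    rintro rfl
    exact hm (φ.injective (by simpa using hs.symm))
  have hφv : φ ∘ v ≠ 0 := fun h0 ↦ hv (φ.injective.comp_left (h0.trans (by ext; simp)))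
  have hNφv : N.map (algebraMap R (AlgebraicClosure K)) *ᵥ (φ ∘ v) = φ μ • (φ ∘ v) := by
    have hmap : N.map (algebraMap R (AlgebraicClosure K)) = (N.map (algebraMap R K)).map φ := by
      ext i j
      exact (hφ (N i j)).symm
    ext i
    rw [hmap, ← φ.map_mulVec, h]
    exact map_mul φ μ (v i)
  have hint : IsIntegral R (φ μ / s) :=
    isIntegral_div_of_isIntegral_weighted hs0 w
      (fun i j ↦ isIntegral_mul_pow_div_pow_of_dvd (hs.trans (hφ m)) hs0 (hN i j)) hφv hNφv
  rw [← isIntegral_algebraMap_iff φ.injective]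
  simpa only [map_div₀, map_pow, div_pow, hs] using hint.pow 2

lemma dvd_of_isIntegral_algebraMap_div [IsDomain R] [IsIntegrallyClosed R] [FaithfulSMul R K]
    {m k : R} (hm : m ≠ 0) (h : IsIntegral R (algebraMap R K k / algebraMap R K m)) : m ∣ k := by
  let F := FractionRing R
  let := FractionRing.liftAlgebra R K
  have hF : IsIntegral R (algebraMap R F k / algebraMap R F m) := by
    rw [← isIntegral_algebraMap_iff (algebraMap F K).injective]
    simpa only [map_div₀, ← IsScalarTower.algebraMap_apply R F K] using h
  obtain ⟨c, hc⟩ := IsIntegrallyClosed.isIntegral_iff.mp hF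
  rw [eq_div_iff (by simpa using hm), ← map_mul] at hc
  exact ⟨c, by rw [mul_comm, FaithfulSMul.algebraMap_injective R F hc]⟩

end Integrality

section RootsOfUnity

variable {K : Type*} [Field K] {ζ : K}

lemma exists_prime_isIntegral_div_sub_one (hζ : IsOfFinOrder ζ) (hζ1 : ζ ≠ 1) :
    ∃ p : ℕ, p.Prime ∧ IsIntegral ℤ ((p : K) / (ζ - 1)) := by
  obtain ⟨p, hp, e, he⟩ := Nat.exists_prime_and_dvd (orderOf_eq_one_iff.not.mpr hζ1)
  have hprim : IsPrimitiveRoot (ζ ^ e) p :=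
    (IsPrimitiveRoot.orderOf ζ).pow hζ.orderOf_pos (he.trans (mul_comm p e))
  have hp_eq : (p : K) = -(∑ j ∈ Finset.range p, ∑ i ∈ Finset.range (e * j), ζ ^ i) * (ζ - 1) :=
    calc (p : K) = -∑ j ∈ Finset.range p, ((ζ ^ e) ^ j - 1) := by
          rw [Finset.sum_sub_distrib, hprim.geom_sum_eq_zero hp.one_lt]
          simp
      _ = _ := by
          rw [neg_mul, Finset.sum_mul]
          simp only [geom_sum_mul, pow_mul]
  refine ⟨p, hp, ?_⟩
  rw [hp_eq, mul_div_cancel_right₀ _ (sub_ne_zero.mpr hζ1)]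
  have hζ_int : IsIntegral ℤ ζ := (IsPrimitiveRoot.orderOf ζ).isIntegral hζ.orderOf_pos
  exact (IsIntegral.sum _ fun j _ ↦ IsIntegral.sum _ fun i _ ↦ hζ_int.pow i).neg

lemma exists_prime_dvd_pow_of_isIntegral_sub_one_pow_div [CharZero K] (hζ : IsOfFinOrder ζ)
    (hζ1 : ζ ≠ 1) {m : ℤ} (hm : m ≠ 0) {k : ℕ} (h : IsIntegral ℤ ((ζ - 1) ^ k / (m : K))) :
    ∃ p : ℕ, p.Prime ∧ m ∣ (p : ℤ) ^ k := by
  obtain ⟨p, hp, hint⟩ := exists_prime_isIntegral_div_sub_one hζ hζ1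
  refine ⟨p, hp, dvd_of_isIntegral_algebraMap_div (K := K) hm ?_⟩
  have hfactor : (p : K) ^ k / m = ((p : K) / (ζ - 1)) ^ k * ((ζ - 1) ^ k / m) := by
    rw [div_pow, div_mul_div_cancel₀ (pow_ne_zero k (sub_ne_zero.mpr hζ1))]
  simpa [hfactor] using (hint.pow k).mul h

end RootsOfUnity

lemma not_six_dvd_prime_sq {p : ℕ} (hp : p.Prime) : ¬ (6 : ℤ) ∣ (p : ℤ) ^ 2 := by
  intro h
  have h6 : 2 * 3 ∣ p ^ 2 := by exact_mod_cast h
  have h2 : 2 = p := (Nat.prime_dvd_prime_iff_eq Nat.prime_two hp).mp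
    (Nat.prime_two.dvd_of_dvd_pow (dvd_of_mul_right_dvd h6))
  have h3 : 3 = p := (Nat.prime_dvd_prime_iff_eq Nat.prime_three hp).mp
    (Nat.prime_three.dvd_of_dvd_pow (dvd_of_mul_left_dvd h6))
  omega

/-- Exponents of `√6` in a diagonal matrix that conjugates every integer matrix satisfying the
congruences `pat6` into one whose entries are all divisible by `√6`. -/
def pat6Weight : Fin 4 → ℕ := ![1, 2, 1, 0]

lemma six_pow_dvd_sq_mul_of_pat6_dvd {N : M4} (hN : ∀ i j, pat6 i j ∣ N i j) (i j : Fin 4) :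
    6 ^ (pat6Weight i + 1) ∣ N i j ^ 2 * 6 ^ pat6Weight j := by
  have hpat : ∀ i j, 6 ^ (pat6Weight i + 1) ∣ pat6 i j ^ 2 * 6 ^ pat6Weight j := by decide
  exact (hpat i j).trans (mul_dvd_mul_right (pow_dvd_pow_of_dvd (hN i j) 2) _)

theorem Gamma6nat_neat_general {n K : Type*} [Fintype n] [DecidableEq n] [Field K] [CharZero K]
    {m : ℤ} (hm : m ≠ 0) (hmp : ∀ p : ℕ, p.Prime → ¬ m ∣ (p : ℤ) ^ 2) (w : n → ℕ)
    {γ : Matrix n n ℤ} (hγ : ∀ i j, m ^ (w i + 1) ∣ (γ - 1) i j ^ 2 * m ^ w j) {lam : K}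
    (heig : (γ.map (Int.cast : ℤ → K) - lam • (1 : Matrix n n K)).det = 0)
    (hru : IsOfFinOrder lam) :
    lam = 1 := by
  obtain ⟨v, hv, hγv⟩ := exists_mulVec_eq_zero_iff.mpr heig
  have hNv : (γ - 1).map (algebraMap ℤ K) *ᵥ v = (lam - 1) • v := by
    rw [sub_mulVec, smul_mulVec, one_mulVec, sub_eq_zero] at hγv
    rw [Matrix.map_sub _ (map_sub _), Matrix.map_one _ (map_zero _) (map_one _), sub_mulVec,
      one_mulVec, sub_smul, one_smul, ← hγv]
    rfl
  have hint : IsIntegral ℤ ((lam - 1) ^ 2 / (m : K)) :=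
    isIntegral_sq_div_of_weighted_dvd (Int.cast_ne_zero.mpr hm) w hγ hv hNv
  by_contra hlam
  obtain ⟨p, hp, hdvd⟩ := exists_prime_dvd_pow_of_isIntegral_sub_one_pow_div hru hlam hm hint
  exact hmp p hp hdvd

/-- Γ₆^♮ is neat: any eigenvalue λ ∈ ℂ of γ ∈ Γ₆^♮ (a root of det(γ − x·I₄))
which is a root of unity equals 1. -/
theorem Gamma6nat_neat (γ : M4) (hγ : γ ∈ Gamma6nat) (lam : ℂ)
    (heig : Matrix.det (γ.map (Int.cast : ℤ → ℂ) -
      lam • (1 : Matrix (Fin 4) (Fin 4) ℂ)) = 0)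
    (hru : ∃ n : ℕ, 1 ≤ n ∧ lam ^ n = 1) :
    lam = 1 := by
  exact Gamma6nat_neat_general (by norm_num) (fun _ ↦ not_six_dvd_prime_sq) pat6Weight
    (six_pow_dvd_sq_mul_of_pat6_dvd hγ.2) heig (isOfFinOrder_iff_pow_eq_one.mpr hru)
end

section
/- The group Γ₆^♮ is torsion-free: if γ ∈ Γ₆^♮ and γⁿ = I₄ for some integer n ≥ 1, then γ = I₄. -/
open Matrix Polynomial

/-! Put `N = γ - 1`. Modulo `6` the pattern makes `N` strictly triangular when the coordinates are
ordered as `4 < 1, 3 < 2`, so `γ` is unipotent modulo `2` and modulo `3`. If `γ ^ q = 1` then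
`N * (1 + γ + ⋯ + γ ^ (q - 1)) = 0`. When `γ` is unipotent modulo a prime `p ∤ q`, the geometric sum
is modulo `p` the unit `q` plus a nilpotent, hence invertible; so its integral determinant is
nonzero and `N = 0`. Unipotence modulo `2` thus forces the order of `γ` to be a power of `2`, and
unipotence modulo `3` then forces `γ = 1`. -/

section Unipotent

variable {A : Type*} [Ring A] {a : A}

theorem isNilpotent_pow_sub_one (ha : IsNilpotent (a - 1)) (k : ℕ) : IsNilpotent (a ^ k - 1) := by
  rw [← mul_geom_sum]
  have hcomm : Commute (a - 1) (∑ i ∈ Finset.range k, a ^ i) :=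
    .sum_right _ _ _ fun i _ ↦ ((Commute.refl a).pow_right i).sub_left (.one_left _)
  exact hcomm.isNilpotent_mul_right ha

theorem isUnit_geom_sum_of_isNilpotent_sub_one (ha : IsNilpotent (a - 1)) {q : ℕ}
    (hq : IsUnit (q : A)) : IsUnit (∑ i ∈ Finset.range q, a ^ i) := by
  have hsplit : ∑ i ∈ Finset.range q, a ^ i = q + ∑ i ∈ Finset.range q, (a ^ i - 1) := by
    simp
  have hnil : IsNilpotent (∑ i ∈ Finset.range q, (a ^ i - 1)) :=
    Commute.isNilpotent_sum (fun i _ ↦ isNilpotent_pow_sub_one ha i) fun i j _ _ ↦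
      ((Commute.pow_pow_self a i j).sub_left (.one_left _)).sub_right (.one_right _)
  rw [hsplit]
  exact hnil.isUnit_add_left_of_commute hq (Nat.commute_cast _ _)

end Unipotent

section Torsion

variable {n R S T : Type*} [Fintype n] [DecidableEq n] [CommRing R] [NoZeroDivisors R]
  [CommRing S] [CommRing T] {M : Matrix n n R}

theorem eq_one_of_pow_eq_one_of_isNilpotent_map_sub_one [Nontrivial S] (f : R →+* S)
    (hM : IsNilpotent (f.mapMatrix M - 1)) {q : ℕ} (hq : IsUnit (q : S)) (h : M ^ q = 1) :
    M = 1 := by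
  set G := ∑ i ∈ Finset.range q, M ^ i with hG
  have hmul : (M - 1) * G = 0 := by rw [mul_geom_sum, h, sub_self]
  have hunit : IsUnit (f.mapMatrix G) := by
    rw [hG, map_sum]
    simp only [map_pow]
    exact isUnit_geom_sum_of_isNilpotent_sub_one hM
      (by simpa using hq.map (algebraMap S (Matrix n n S)))
  have hdet : G.det ≠ 0 := by
    rw [Matrix.isUnit_iff_isUnit_det, ← RingHom.map_det] at hunit
    exact ne_zero_of_map hunit.ne_zero
  have hsmul : G.det • (M - 1) = 0 :=
    calc G.det • (M - 1) = (M - 1) * (G * G.adjugate) := by simp [mul_adjugate]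
      _ = 0 := by rw [← mul_assoc, hmul, zero_mul]
  exact sub_eq_zero.mp ((smul_eq_zero.mp hsmul).resolve_left hdet)

theorem exists_pow_prime_pow_eq_one_of_isNilpotent_map_sub_one {p : ℕ} (hp : p.Prime) [CharP S p]
    (f : R →+* S) (hM : IsNilpotent (f.mapMatrix M - 1)) (hfin : IsOfFinOrder M) :
    ∃ k : ℕ, M ^ p ^ k = 1 := by
  have : Nontrivial S := CharP.nontrivial_of_char_ne_one hp.ne_one
  obtain ⟨k, m, hpm, horder⟩ :=
    Nat.exists_eq_pow_mul_and_not_dvd hfin.orderOf_pos.ne' p hp.ne_one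
  refine ⟨k, eq_one_of_pow_eq_one_of_isNilpotent_map_sub_one f (q := m) ?_
    ((CharP.isUnit_natCast_iff hp).2 hpm) ?_⟩
  · rw [map_pow]
    exact isNilpotent_pow_sub_one hM _
  · rw [← pow_mul, ← horder, pow_orderOf_eq_one]

theorem eq_one_of_isOfFinOrder_of_isNilpotent_map_sub_one {p ℓ : ℕ} (hp : p.Prime) (hℓ : ℓ.Prime)
    (hne : p ≠ ℓ) [CharP S p] [CharP T ℓ] (f : R →+* S) (g : R →+* T)
    (hf : IsNilpotent (f.mapMatrix M - 1)) (hg : IsNilpotent (g.mapMatrix M - 1))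
    (hfin : IsOfFinOrder M) : M = 1 := by
  have : Nontrivial T := CharP.nontrivial_of_char_ne_one hℓ.ne_one
  obtain ⟨k, hk⟩ := exists_pow_prime_pow_eq_one_of_isNilpotent_map_sub_one hp f hf hfin
  refine eq_one_of_pow_eq_one_of_isNilpotent_map_sub_one g hg ?_ hk
  rw [CharP.isUnit_natCast_iff hℓ]
  exact fun hdvd ↦ hne ((Nat.prime_dvd_prime_iff_eq hℓ hp).1 (hℓ.dvd_of_dvd_pow hdvd)).symm

end Torsion

open scoped Finset in
theorem isNilpotent_of_strictly_blockTriangular {n R α : Type*} [Fintype n] [DecidableEq n]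
    [Semiring R] [Preorder α] (N : Matrix n n R) (b : n → α)
    (hN : ∀ i j, ¬ b i < b j → N i j = 0) : IsNilpotent N := by
  classical
  have hpow (k : ℕ) : ∀ i j, #{l | b i < b l} < k → (N ^ k) i j = 0 := by
    induction k with
    | zero => simp
    | succ k ih =>
      intro i j hk
      rw [pow_succ', Matrix.mul_apply]
      refine Finset.sum_eq_zero fun l _ ↦ ?_
      by_cases hil : b i < b l
      · have hcard : #{x | b l < b x} < #{x | b i < b x} :=
          Finset.card_lt_card <| Finset.ssubset_iff_of_subset
            (Finset.monotone_filter_right _ fun x _ hx ↦ hil.trans hx) |>.2 ⟨l, by simp [hil]⟩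
        rw [ih l j (by lia), mul_zero]
      · rw [hN i l hil, zero_mul]
  refine ⟨Fintype.card n + 1, Matrix.ext fun i j ↦ hpow _ i j ?_⟩
  exact Nat.lt_succ_of_le (Finset.card_le_univ _)

theorem isNilpotent_map_sub_one_of_pat6_dvd {γ : M4} (hγ : ∀ i j, pat6 i j ∣ (γ - 1) i j) {p : ℕ}
    (hp : p ∣ 6) : IsNilpotent ((Int.castRingHom (ZMod p)).mapMatrix γ - 1) := by
  let b : Fin 4 → ℕ := ![1, 2, 1, 0]
  have hpat : ∀ i j, ¬ b i < b j → 6 ∣ pat6 i j := by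
    intro i j
    fin_cases i <;> fin_cases j <;> decide
  rw [← map_one (Int.castRingHom (ZMod p)).mapMatrix, ← map_sub]
  refine isNilpotent_of_strictly_blockTriangular _ b fun i j hij ↦ ?_
  exact (ZMod.intCast_zmod_eq_zero_iff_dvd _ p).2
    ((Int.natCast_dvd_natCast.2 hp).trans ((hpat i j hij).trans (hγ i j)))

theorem Gamma6nat_torsionFree_general (γ : M4) (hγ : ∀ i j, pat6 i j ∣ (γ - 1) i j) (n : ℕ)
    (hn : 1 ≤ n) (h : γ ^ n = 1) : γ = 1 :=
  eq_one_of_isOfFinOrder_of_isNilpotent_map_sub_one Nat.prime_two Nat.prime_three (by decide)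
    (Int.castRingHom (ZMod 2)) (Int.castRingHom (ZMod 3))
    (isNilpotent_map_sub_one_of_pat6_dvd hγ (by decide))
    (isNilpotent_map_sub_one_of_pat6_dvd hγ (by decide))
    (isOfFinOrder_iff_pow_eq_one.2 ⟨n, hn, h⟩)

/-- Γ₆^♮ is torsion-free: if γ ∈ Γ₆^♮ and γⁿ = I₄ for some n ≥ 1, then γ = I₄. -/
theorem Gamma6nat_torsionFree (γ : M4) (hγ : γ ∈ Gamma6nat) (n : ℕ) (hn : 1 ≤ n)
    (h : γ ^ n = 1) : γ = 1 := by
  exact Gamma6nat_torsionFree_general γ hγ.2 n hn h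
end

section
/- Every element γ ≠ I₄ of finite order in Γ₆^bil is conjugate within Sp(4,ℤ) either to ζ or to ζ·[0,1;0]; that is, there exists δ ∈ Sp(4,ℤ) with δγδ⁻¹ = ζ or δγδ⁻¹ = ζ·[0,1;0]. -/
open Matrix Polynomial

/-- The Heisenberg matrix [m,n;k] = [[1,m,0,0],[0,1,0,0],[0,n,1,0],[n,k,−m,1]]. -/
def Hmat (m n k : ℤ) : M4 := !![1,m,0,0; 0,1,0,0; 0,n,1,0; n,k,-m,1]

/-!
Modulo 6, the square of an element γ of Γ₆^bil is unipotent, so for `q = 2, 3` some power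
`γ ^ (2 * q ^ k)` is congruent to 1 modulo `q`, and its `q`-th power is congruent to 1 modulo
`q ^ 2`. Minkowski's lemma says that a torsion matrix congruent to 1 modulo `q ^ 2` is trivial: if
`(1 + b) ^ p = 1` then `p * b` is a multiple of `b ^ 2`, which is divisible by `q` too often.
Hence γ² has order both a power of 2 and a power of 3, so γ² = 1.

For an involution γ ≠ ±1, take a primitive `v` with `γ v = -v` and `w` with `ω w v = 1`. Then
`w + γ w` is fixed by γ, so it equals `k t` with `t` primitive and fixed. Replacing `w` by
`w - m t` changes `k` by `-2 m`, so one may assume `k = 0` or `k = 1`, and completing `w, v, t` to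
a symplectic basis puts γ into the form ζ or ζ·[0,1;0] respectively.
-/

section Torsion

lemma exists_one_add_pow_eq {R : Type*} [Semiring R] (b : R) (n : ℕ) :
    ∃ c, (1 + b) ^ n = 1 + n * b + b ^ 2 * c := by
  obtain ⟨f, hf⟩ := powAddExpansion (1 : ℕ[X]) X n
  rw [mul_comm f] at hf
  exact ⟨aeval b f, by simpa using congrArg (aeval b) hf⟩

variable {R : Type*} [Ring R] {q : ℕ}

lemma sq_dvd_pow_sub_one_of_dvd_sub_one {a : R} (h : (q : R) ∣ a - 1) :
    (q : R) ^ 2 ∣ a ^ q - 1 := by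
  obtain ⟨b, hb⟩ := h
  obtain ⟨c, hc⟩ := exists_one_add_pow_eq (a - 1) q
  rw [add_sub_cancel, hb, (Nat.cast_commute q b).mul_pow] at hc
  refine ⟨b + b ^ 2 * c, ?_⟩
  rw [hc]
  noncomm_ring

lemma dvd_of_sq_dvd_prime_mul (hq : q.Prime) (hreg : IsLeftRegular (q : R)) {p : ℕ}
    (hp : p.Prime) {c : R} (h : (q : R) ^ 2 ∣ p * c) : (q : R) ∣ c := by
  obtain rfl | hpq := eq_or_ne p q
  · obtain ⟨d, hd⟩ := h
    exact ⟨d, hreg (by simpa only [sq, mul_assoc] using hd)⟩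
  · obtain ⟨d, hd⟩ := (dvd_pow_self (q : R) two_ne_zero).trans h
    obtain ⟨u, v, huv⟩ : IsCoprime (q : ℤ) p :=
      Nat.isCoprime_iff_coprime.2 ((Nat.coprime_primes hq hp).2 hpq.symm)
    have huv' : (q : R) * u + v * p = 1 := by
      rw [(Nat.cast_commute q (u : R)).eq]
      exact_mod_cast congrArg (Int.cast : ℤ → R) huv
    refine ⟨u * c + v * d, ?_⟩
    calc c = (q * u + v * p) * c := by rw [huv', one_mul]
      _ = q * (u * c) + v * (p * c) := by noncomm_ring
      _ = q * (u * c + v * d) := by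
        rw [hd, mul_add, ← mul_assoc (v : R), ← (Nat.cast_commute q (v : R)).eq, mul_assoc]

lemma eq_one_of_prime_pow_eq_one (hq : q.Prime) (hreg : IsLeftRegular (q : R))
    (hfin : ∀ x : R, x ≠ 0 → FiniteMultiplicity (q : R) x) {a : R} (ha : (q : R) ^ 2 ∣ a - 1)
    {p : ℕ} (hp : p.Prime) (hap : a ^ p = 1) : a = 1 := by
  by_contra hne
  have hmult := hfin _ (sub_ne_zero.2 hne)
  obtain ⟨c, hc, hqc⟩ := hmult.exists_eq_pow_mul_and_not_dvd
  set m := multiplicity (q : R) (a - 1)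
  have hm : 2 ≤ m := hmult.le_multiplicity_of_pow_dvd ha
  obtain ⟨d, hd⟩ := exists_one_add_pow_eq (a - 1) p
  have hzero : (p : R) * (a - 1) + (a - 1) ^ 2 * d = 0 := by
    simpa [hap, add_assoc] using hd
  have hpc : (p : R) * c = q ^ m * -(c ^ 2 * d) := by
    apply hreg.pow m
    calc (q : R) ^ m * (p * c) = p * (a - 1) := by
          rw [hc, ← mul_assoc, ← mul_assoc, (Nat.cast_commute p ((q : R) ^ m)).eq]
      _ = -((a - 1) ^ 2 * d) := eq_neg_of_add_eq_zero_left hzero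
      _ = q ^ m * (q ^ m * -(c ^ 2 * d)) := by
        rw [hc, ((Nat.cast_commute q c).pow_left m).mul_pow]
        noncomm_ring
  exact hqc (dvd_of_sq_dvd_prime_mul hq hreg hp ((pow_dvd_pow _ hm).trans ⟨_, hpc⟩))

theorem eq_one_of_isOfFinOrder_of_sq_dvd_sub_one (hq : q.Prime) (hreg : IsLeftRegular (q : R))
    (hfin : ∀ x : R, x ≠ 0 → FiniteMultiplicity (q : R) x) {a : R} (ha : IsOfFinOrder a)
    (hqa : (q : R) ^ 2 ∣ a - 1) : a = 1 := by
  by_contra hne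
  have hp : (orderOf a).minFac.Prime := Nat.minFac_prime (orderOf_eq_one_iff.not.2 hne)
  set p := (orderOf a).minFac
  have horder : orderOf (a ^ (orderOf a / p)) = p :=
    orderOf_pow_orderOf_div ha.orderOf_pos.ne' (orderOf a).minFac_dvd
  have hdvd : (q : R) ^ 2 ∣ a ^ (orderOf a / p) - 1 := by
    simpa using hqa.trans ((Commute.one_right a).sub_dvd_pow_sub_pow (orderOf a / p))
  have hone := eq_one_of_prime_pow_eq_one hq hreg hfin hdvd hp
    (by simpa only [horder] using pow_orderOf_eq_one (a ^ (orderOf a / p)))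
  rw [hone, orderOf_one] at horder
  exact hp.one_lt.ne horder

theorem exists_pow_prime_pow_eq_one (hq : q.Prime) (hreg : IsLeftRegular (q : R))
    (hfin : ∀ x : R, x ≠ 0 → FiniteMultiplicity (q : R) x) {a : R} (ha : IsOfFinOrder a) {k : ℕ}
    (hk : (q : R) ∣ (a - 1) ^ k) : ∃ N, a ^ q ^ N = 1 := by
  obtain ⟨r, hr⟩ := (Commute.one_right (a - 1)).exists_add_pow_prime_pow_eq hq k
  have hdvd : (q : R) ∣ a ^ q ^ k - 1 := by
    rw [sub_add_cancel, one_pow] at hr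
    rw [hr, add_right_comm, add_sub_cancel_right, mul_assoc, mul_assoc]
    exact (hk.trans (pow_dvd_pow _ (Nat.lt_pow_self hq.one_lt).le)).add (dvd_mul_right _ _)
  refine ⟨k + 1, eq_one_of_isOfFinOrder_of_sq_dvd_sub_one hq hreg hfin ha.pow ?_⟩
  rw [pow_succ q k, pow_mul]
  exact sq_dvd_pow_sub_one_of_dvd_sub_one hdvd

end Torsion

section IntegerMatrix

variable {n : Type*} [Fintype n] [DecidableEq n]

lemma natCast_dvd_iff_forall_dvd {R : Type*} [Ring R] {m : ℕ} {A : Matrix n n R} :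
    (m : Matrix n n R) ∣ A ↔ ∀ i j, (m : R) ∣ A i j := by
  constructor
  · rintro ⟨B, rfl⟩ i j
    exact ⟨B i j, by simp [← nsmul_eq_mul]⟩
  · intro h
    choose B hB using h
    exact ⟨Matrix.of B, by ext i j; simp [← nsmul_eq_mul, hB]⟩

lemma natCast_dvd_iff_map_eq_zero {m : ℕ} {A : Matrix n n ℤ} :
    (m : Matrix n n ℤ) ∣ A ↔ (Int.castRingHom (ZMod m)).mapMatrix A = 0 := by
  simp [natCast_dvd_iff_forall_dvd, ← Matrix.ext_iff, ZMod.intCast_zmod_eq_zero_iff_dvd]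

lemma isLeftRegular_natCast_matrix {m : ℕ} (hm : m ≠ 0) :
    IsLeftRegular (m : Matrix n n ℤ) := by
  intro A B h
  ext i j
  have hij := congrFun₂ h i j
  simpa only [← nsmul_eq_mul, Matrix.smul_apply, nsmul_right_inj hm] using hij

lemma finiteMultiplicity_natCast_matrix {m : ℕ} (hm : m ≠ 1) {A : Matrix n n ℤ} (hA : A ≠ 0) :
    FiniteMultiplicity (m : Matrix n n ℤ) A := by
  obtain ⟨i, j, hij⟩ : ∃ i j, A i j ≠ 0 := by
    by_contra! h
    exact hA (Matrix.ext h)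
  obtain ⟨k, hk⟩ : FiniteMultiplicity (m : ℤ) (A i j) :=
    Int.finiteMultiplicity_iff.2 ⟨by simpa, hij⟩
  refine ⟨k, fun h ↦ hk ?_⟩
  rw [← Nat.cast_pow] at h ⊢
  exact natCast_dvd_iff_forall_dvd.1 h i j

lemma exists_pow_prime_pow_eq_one_matrix {q : ℕ} (hq : q.Prime) {A : Matrix n n ℤ}
    (hA : IsOfFinOrder A) {k : ℕ} (hk : (q : Matrix n n ℤ) ∣ (A - 1) ^ k) :
    ∃ N, A ^ q ^ N = 1 :=
  exists_pow_prime_pow_eq_one hq (isLeftRegular_natCast_matrix hq.ne_zero)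
    (fun _ ↦ finiteMultiplicity_natCast_matrix hq.ne_one) hA hk

end IntegerMatrix

section Primitive

variable {R n : Type*} [CommRing R] [Fintype n]

lemma exists_ne_zero_mulVec_eq_smul [DecidableEq n] {A : Matrix n n R} {μ : R} (hA : A * A = 1)
    (hμ : μ * μ = 1) (hne : A ≠ -(μ • 1)) : ∃ u ≠ 0, A *ᵥ u = μ • u := by
  have hne' : (A + μ • (1 : Matrix n n R)) ≠ 0 := fun h ↦ hne (eq_neg_of_add_eq_zero_left h)
  obtain ⟨x, hx⟩ : ∃ x, (A + μ • (1 : Matrix n n R)) *ᵥ x ≠ 0 := by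
    by_contra! h
    exact hne' (Matrix.ext_of_mulVec_single fun i ↦ by simp only [h, Matrix.zero_mulVec])
  refine ⟨_, hx, ?_⟩
  rw [mulVec_mulVec, ← Matrix.smul_mulVec, mul_add, hA, smul_add, smul_smul, hμ, mul_smul_comm,
    mul_one, one_smul, add_comm]

lemma exists_eq_smul_and_dotProduct_eq_one [IsDomain R] [IsBezout R] {u : n → R} (hu : u ≠ 0) :
    ∃ (k : R) (t s : n → R), k ≠ 0 ∧ u = k • t ∧ s ⬝ᵥ t = 1 := by
  obtain ⟨k, hk⟩ := (IsBezout.isPrincipal_of_FG (Ideal.span (Set.range u))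
    (Submodule.fg_span (Set.finite_range u))).principal
  have hdvd (i : n) : k ∣ u i :=
    Ideal.mem_span_singleton.1 (hk.le (Ideal.subset_span (Set.mem_range_self i)))
  choose t ht using hdvd
  have hut : u = k • t := funext ht
  have hk0 : k ≠ 0 := by
    rintro rfl
    exact hu (by rw [hut, zero_smul])
  obtain ⟨s, hs⟩ := Ideal.mem_span_range_iff_exists_fun.1
    (hk.ge (Ideal.mem_span_singleton_self k))
  have hsu : s ⬝ᵥ u = k := hs
  refine ⟨k, t, s, hk0, hut, mul_left_cancel₀ hk0 ?_⟩
  rw [← smul_eq_mul, ← dotProduct_smul, ← hut, hsu, mul_one]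

lemma exists_primitive_eigenvector [IsDomain R] [IsBezout R] {A : Matrix n n R} {μ : R}
    {u : n → R} (hu : u ≠ 0) (hA : A *ᵥ u = μ • u) :
    ∃ (k : R) (t s : n → R), u = k • t ∧ A *ᵥ t = μ • t ∧ s ⬝ᵥ t = 1 := by
  obtain ⟨k, t, s, hk, rfl, hst⟩ := exists_eq_smul_and_dotProduct_eq_one hu
  rw [mulVec_smul, smul_comm] at hA
  exact ⟨k, t, s, rfl, smul_right_injective _ hk hA, hst⟩

end Primitive

section AlternatingForm

variable {R M : Type*} [CommRing R] [AddCommGroup M] [Module R M]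
  {ω : LinearMap.BilinForm R M} {σ : M → M}

lemma apply_map_eq_zero_of_isSelfAdjoint [IsAddTorsionFree R] (hω : ω.IsAlt)
    (hσ : ω.IsSelfAdjoint σ) (x : M) : ω x (σ x) = 0 :=
  self_eq_neg.1 <| calc
    ω x (σ x) = ω (σ x) x := (hσ x x).symm
    _ = -ω x (σ x) := (hω.neg_eq x (σ x)).symm

lemma apply_eq_zero_of_map_eq_neg_add_smul [IsAddTorsionFree R] (hω : ω.IsAlt)
    (hσ : ω.IsSelfAdjoint σ) {w t : M} {ε : R} (ht : σ t = t) (hw : σ w = -w + ε • t) :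
    ω w t = 0 :=
  self_eq_neg.1 <| calc
    ω w t = ω (σ w) t := by rw [hσ, ht]
    _ = -ω w t := by simp [hw, hω.self_eq_zero]

lemma exists_apply_eq_one_and_apply_eq_zero (hω : ω.IsAlt) {w v t s : M} (hwv : ω w v = 1)
    (hwt : ω w t = 0) (hvt : ω v t = 0) (hst : ω s t = 1) :
    ∃ f, ω f t = 1 ∧ ω f v = 0 ∧ ω f w = 0 := by
  have hvw : ω v w = -1 := by rw [← hω.neg_eq, hwv]
  refine ⟨s - ω s v • w + ω s w • v, ?_, ?_, ?_⟩ <;>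
    simp [hwv, hwt, hvt, hst, hvw, hω.self_eq_zero]

end AlternatingForm

section Jacobi

variable {R : Type*} [CommRing R]

/-- The block-triangular shape that the elements of Γ₆^bil take modulo 6, with `s = 1` on Γ₆^♮ and
`s = -1` on ζΓ₆^♮. -/
def jacobiMatrix (s a b c d e : R) : Matrix (Fin 4) (Fin 4) R :=
  !![s,a,0,0; 0,1,0,0; 0,b,s,0; c,d,e,1]

lemma jacobiMatrix_mul (s a b c d e s' a' b' c' d' e' : R) :
    jacobiMatrix s a b c d e * jacobiMatrix s' a' b' c' d' e' =
      jacobiMatrix (s * s') (s * a' + a) (b + s * b') (c * s' + c')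
        (c * a' + d + e * b' + d') (e * s' + e') := by
  ext i j
  fin_cases i <;> fin_cases j <;> simp [jacobiMatrix, Matrix.mul_apply, Fin.sum_univ_four]

lemma jacobiMatrix_one_sub_one_pow_three (a b c d e : R) :
    (jacobiMatrix 1 a b c d e - 1) ^ 3 = 0 := by
  rw [pow_three]
  ext i j
  fin_cases i <;> fin_cases j <;> simp [jacobiMatrix, Matrix.mul_apply, Fin.sum_univ_four]

lemma jacobiMatrix_sq_sub_one_pow_three {s : R} (hs : s * s = 1) (a b c d e : R) :
    (jacobiMatrix s a b c d e ^ 2 - 1) ^ 3 = 0 := by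
  rw [sq, jacobiMatrix_mul, hs, jacobiMatrix_one_sub_one_pow_three]

end Jacobi

lemma exists_mapMatrix_eq_jacobiMatrix_of_mem_Gamma6nat {γ : M4} (hγ : γ ∈ Gamma6nat) :
    ∃ a b c d e, (Int.castRingHom (ZMod 6)).mapMatrix γ = jacobiMatrix 1 a b c d e := by
  refine ⟨γ 0 1, γ 2 1, γ 3 0, γ 3 1, γ 3 2, ?_⟩
  have hdvd (i j : Fin 4) (h : 6 ∣ pat6 i j) : (γ i j : ZMod 6) = ((1 : M4) i j : ℤ) := by
    rw [eq_comm, ZMod.intCast_eq_intCast_iff_dvd_sub]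
    exact h.trans (hγ.2 i j)
  ext i j
  fin_cases i <;> fin_cases j <;>
    first
    | rfl
    | exact (hdvd _ _ (by decide)).trans (by simp [jacobiMatrix])

lemma exists_mapMatrix_eq_jacobiMatrix_of_mem_Gamma6bil {γ : M4} (hγ : γ ∈ Gamma6bil) :
    ∃ s a b c d e, s * s = 1 ∧
      (Int.castRingHom (ZMod 6)).mapMatrix γ = jacobiMatrix s a b c d e := by
  obtain hγ | ⟨η, hη, rfl⟩ := hγ
  · obtain ⟨a, b, c, d, e, h⟩ := exists_mapMatrix_eq_jacobiMatrix_of_mem_Gamma6nat hγ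
    exact ⟨1, a, b, c, d, e, one_mul 1, h⟩
  · obtain ⟨a, b, c, d, e, h⟩ := exists_mapMatrix_eq_jacobiMatrix_of_mem_Gamma6nat hη
    have hζ : (Int.castRingHom (ZMod 6)).mapMatrix zetaM = jacobiMatrix (-1) 0 0 0 0 0 := by
      decide
    have hmul := (map_mul (Int.castRingHom (ZMod 6)).mapMatrix zetaM η).trans
      (by rw [hζ, h, jacobiMatrix_mul, mul_one])
    exact ⟨-1, _, _, _, _, _, by norm_num, hmul⟩

lemma six_dvd_sq_sub_one_pow_three {γ : M4} (hγ : γ ∈ Gamma6bil) :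
    ((6 : ℕ) : M4) ∣ (γ ^ 2 - 1) ^ 3 := by
  obtain ⟨s, a, b, c, d, e, hs, h⟩ := exists_mapMatrix_eq_jacobiMatrix_of_mem_Gamma6bil hγ
  rw [natCast_dvd_iff_map_eq_zero]
  rw [map_pow, map_sub, map_pow, map_one, h, jacobiMatrix_sq_sub_one_pow_three hs]

lemma neg_one_notMem_Gamma6bil : -1 ∉ Gamma6bil := by
  intro h
  obtain ⟨s, a, b, c, d, e, -, h⟩ := exists_mapMatrix_eq_jacobiMatrix_of_mem_Gamma6bil h
  have h11 : ((-1 : ℤ) : ZMod 6) = 1 := congrFun₂ h 1 1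
  exact absurd h11 (by decide)

theorem sq_eq_one_of_mem_Gamma6bil {γ : M4} (hγ : γ ∈ Gamma6bil) (hfin : IsOfFinOrder γ) :
    γ ^ 2 = 1 := by
  have hdvd {q : ℕ} (hq : q ∣ 6) : (q : M4) ∣ (γ ^ 2 - 1) ^ 3 :=
    (Nat.cast_dvd_cast hq).trans (six_dvd_sq_sub_one_pow_three hγ)
  obtain ⟨k, hk⟩ :=
    exists_pow_prime_pow_eq_one_matrix Nat.prime_two hfin.pow (hdvd (by decide))
  obtain ⟨l, hl⟩ :=
    exists_pow_prime_pow_eq_one_matrix Nat.prime_three hfin.pow (hdvd (by decide))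
  have hcop : Nat.Coprime (2 ^ k) (3 ^ l) := Nat.Coprime.pow k l (by decide)
  simpa only [hcop.gcd_eq_one, pow_one] using pow_gcd_eq_one.2 ⟨hk, hl⟩

/-- The symplectic form on ℤ⁴ whose Gram matrix in the standard basis is `J4`. -/
def sympForm : LinearMap.BilinForm ℤ (Fin 4 → ℤ) := Matrix.toBilin' J4

lemma sympForm_apply (x y : Fin 4 → ℤ) : sympForm x y = x ⬝ᵥ J4 *ᵥ y :=
  Matrix.toBilin'_apply' J4 x y

lemma sympForm_isAlt : sympForm.IsAlt := by
  intro x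
  simp only [sympForm_apply, dotProduct, mulVec, J4, Int.reduceNeg, of_apply, cons_val',
    cons_val_fin_one, Fin.sum_univ_four, Fin.isValue, cons_val_zero, cons_val_one, cons_val,
    zero_mul, add_zero, one_mul, zero_add, neg_mul, mul_neg]
  ring

lemma J4_mul_J4 : J4 * J4 = -1 := by decide

lemma exists_sympForm_eq_dotProduct (s : Fin 4 → ℤ) : ∃ x, ∀ y, sympForm x y = s ⬝ᵥ y := by
  refine ⟨-(s ᵥ* J4), fun y ↦ ?_⟩
  rw [sympForm_apply, dotProduct_mulVec, neg_vecMul, vecMul_vecMul, J4_mul_J4, vecMul_neg,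
    vecMul_one, neg_neg]

lemma sympForm_isSelfAdjoint_mulVec {γ : M4} (hγ : γ ∈ Sp4Z) (hsq : γ * γ = 1) :
    sympForm.IsSelfAdjoint γ.mulVec := by
  have hadj : γᵀ * J4 = J4 * γ := by
    calc γᵀ * J4 = γᵀ * J4 * γ * γ := by rw [Matrix.mul_assoc, hsq, Matrix.mul_one]
      _ = J4 * γ := by rw [hγ]
  intro x y
  simp only [sympForm_apply]
  rw [← vecMul_transpose, ← dotProduct_mulVec, mulVec_mulVec, mulVec_mulVec, hadj]

lemma mul_mem_Sp4Z {γ η : M4} (hγ : γ ∈ Sp4Z) (hη : η ∈ Sp4Z) : γ * η ∈ Sp4Z := by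
  have hγ' : γᵀ * J4 * γ = J4 := hγ
  calc (γ * η)ᵀ * J4 * (γ * η) = ηᵀ * (γᵀ * J4 * γ) * η := by
        simp only [transpose_mul, Matrix.mul_assoc]
    _ = J4 := by rw [hγ', hη]

lemma Gamma6bil_subset_Sp4Z : Gamma6bil ⊆ Sp4Z := by
  rintro _ (hγ | ⟨η, hη, rfl⟩)
  · exact hγ.1
  · have hζ : zetaMᵀ * J4 * zetaM = J4 := by decide
    exact mul_mem_Sp4Z hζ hη.1

/-- Conjugacy under Sp(4,ℤ). The inverse `δ'` of the conjugating matrix is part of the data because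
`Sp4Z` is a plain set of matrices. -/
def IsSp4ZConj (γ η : M4) : Prop :=
  ∃ δ δ' : M4, δ ∈ Sp4Z ∧ δ * δ' = 1 ∧ δ' * δ = 1 ∧ δ * γ * δ' = η

lemma mem_Sp4Z_of_mul_eq_one {P Q : M4} (hP : P ∈ Sp4Z) (hPQ : P * Q = 1) : Q ∈ Sp4Z := by
  have hP' : Pᵀ * J4 * P = J4 := hP
  calc Qᵀ * J4 * Q = Qᵀ * (Pᵀ * J4 * P) * Q := by rw [hP']
    _ = (P * Q)ᵀ * J4 * (P * Q) := by simp only [transpose_mul, Matrix.mul_assoc]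
    _ = J4 := by simp [hPQ]

lemma isSp4ZConj_of_transpose_mul_mul {γ η P : M4} (hP : P ∈ Sp4Z)
    (h : Pᵀ * J4 * γ * P = J4 * η) : IsSp4ZConj γ η := by
  have hP' : Pᵀ * J4 * P = J4 := hP
  have hQP : -J4 * Pᵀ * J4 * P = 1 := by
    rw [Matrix.mul_assoc (-J4), Matrix.mul_assoc (-J4), hP', neg_mul, J4_mul_J4, neg_neg]
  have hPQ : P * (-J4 * Pᵀ * J4) = 1 := mul_eq_one_comm.1 hQP
  refine ⟨-J4 * Pᵀ * J4, P, mem_Sp4Z_of_mul_eq_one hP hPQ, hQP, hPQ, ?_⟩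
  calc -J4 * Pᵀ * J4 * γ * P = -J4 * (Pᵀ * J4 * γ * P) := by simp only [Matrix.mul_assoc]
    _ = -(J4 * J4) * η := by rw [h, ← Matrix.mul_assoc, neg_mul]
    _ = η := by rw [J4_mul_J4, neg_neg, Matrix.one_mul]

lemma isSp4ZConj_of_sympForm {γ η : M4} (f : Fin 4 → Fin 4 → ℤ)
    (hf : ∀ i j, sympForm (f i) (f j) = J4 i j)
    (hγ : ∀ i j, sympForm (f i) (γ *ᵥ f j) = (J4 * η) i j) : IsSp4ZConj γ η := by
  apply isSp4ZConj_of_transpose_mul_mul (P := (Matrix.of f)ᵀ)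
  · refine Matrix.ext fun i j ↦ (?_ : _ = _).trans (hf i j)
    rw [sympForm_apply, Matrix.mul_assoc]
    rfl
  · refine Matrix.ext fun i j ↦ (?_ : _ = _).trans (hγ i j)
    rw [sympForm_apply, mulVec_mulVec, Matrix.mul_assoc, Matrix.mul_assoc, ← Matrix.mul_assoc J4]
    rfl

lemma J4_mul_zetaM_mul_Hmat (ε : ℤ) :
    J4 * (zetaM * Hmat 0 ε 0) = !![0,-ε,-1,0; ε,0,0,1; 1,0,0,0; 0,-1,0,0] := by
  ext i j
  fin_cases i <;> fin_cases j <;>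
    simp [J4, zetaM, Hmat, Matrix.mul_apply, Fin.sum_univ_four]

lemma isSp4ZConj_zetaM_mul_Hmat {γ : M4} (hγ : γ ∈ Sp4Z) (hsq : γ * γ = 1) {ε : ℤ}
    {w v t s : Fin 4 → ℤ} (hv : γ *ᵥ v = -v) (ht : γ *ᵥ t = t) (hw : γ *ᵥ w = -w + ε • t)
    (hwv : sympForm w v = 1) (hst : sympForm s t = 1) :
    IsSp4ZConj γ (zetaM * Hmat 0 ε 0) := by
  have hω := sympForm_isAlt
  have hσ := sympForm_isSelfAdjoint_mulVec hγ hsq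
  have hwt : sympForm w t = 0 := apply_eq_zero_of_map_eq_neg_add_smul hω hσ ht hw
  have hvt : sympForm v t = 0 :=
    apply_eq_zero_of_map_eq_neg_add_smul hω hσ (ε := 0) ht (by simpa using hv)
  obtain ⟨f, hft, hfv, hfw⟩ := exists_apply_eq_one_and_apply_eq_zero hω hwv hwt hvt hst
  have hvw : sympForm v w = -1 := by rw [← hω.neg_eq, hwv]
  have htf : sympForm t f = -1 := by rw [← hω.neg_eq, hft]
  have htw : sympForm t w = 0 := hω.eq_iff.1 hwt
  have htv : sympForm t v = 0 := hω.eq_iff.1 hvt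
  have hvf : sympForm v f = 0 := hω.eq_iff.1 hfv
  have hwf : sympForm w f = 0 := hω.eq_iff.1 hfw
  have hγf (x : Fin 4 → ℤ) : sympForm x (γ *ᵥ f) = sympForm (γ *ᵥ x) f := (hσ x f).symm
  have hγff : sympForm (γ *ᵥ f) f = 0 :=
    (hσ f f).trans (apply_map_eq_zero_of_isSelfAdjoint hω hσ f)
  apply isSp4ZConj_of_sympForm ![w, f, v, t] <;> intro i j
  · fin_cases i <;> fin_cases j <;>
      simp [J4, hω.self_eq_zero, *]
  · rw [J4_mul_zetaM_mul_Hmat]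
    fin_cases i <;> fin_cases j <;>
      simp [-zsmul_eq_mul, hω.self_eq_zero, *]

lemma exists_adapted_vectors {γ : M4} (hγ : γ ∈ Sp4Z) (hsq : γ * γ = 1) (hne : γ ≠ 1)
    (hne' : γ ≠ -1) :
    ∃ (ε : ℤ) (w v t s : Fin 4 → ℤ), (ε = 0 ∨ ε = 1) ∧ γ *ᵥ v = -v ∧ γ *ᵥ t = t ∧
      γ *ᵥ w = -w + ε • t ∧ sympForm w v = 1 ∧ sympForm s t = 1 := by
  obtain ⟨u, hu, huv⟩ := exists_ne_zero_mulVec_eq_smul (μ := -1) hsq (by simp) (by simpa using hne)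
  obtain ⟨-, v, c, -, hv, hcv⟩ := exists_primitive_eigenvector hu huv
  obtain ⟨w, hw⟩ := exists_sympForm_eq_dotProduct c
  have hwfix : γ *ᵥ (w + γ *ᵥ w) = w + γ *ᵥ w := by
    rw [mulVec_add, mulVec_mulVec, hsq, one_mulVec, add_comm]
  obtain ⟨k, t, d, hk, ht, hdt⟩ : ∃ (k : ℤ) (t d : Fin 4 → ℤ),
      w + γ *ᵥ w = k • t ∧ γ *ᵥ t = (1 : ℤ) • t ∧ d ⬝ᵥ t = 1 := by
    by_cases hzero : w + γ *ᵥ w = 0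
    · obtain ⟨u, hu, hut⟩ :=
        exists_ne_zero_mulVec_eq_smul (μ := 1) hsq (by simp) (by simpa using hne')
      obtain ⟨-, t, d, -, ht, hdt⟩ := exists_primitive_eigenvector hu hut
      exact ⟨0, t, d, by rw [hzero, zero_smul], ht, hdt⟩
    · exact exists_primitive_eigenvector hzero (by rw [hwfix, one_smul])
  obtain ⟨s, hs⟩ := exists_sympForm_eq_dotProduct d
  rw [neg_one_smul] at hv
  rw [one_smul] at ht
  have hvt : sympForm v t = 0 := apply_eq_zero_of_map_eq_neg_add_smul sympForm_isAlt
    (sympForm_isSelfAdjoint_mulVec hγ hsq) (ε := 0) ht (by simpa using hv)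
  refine ⟨k % 2, w - (k / 2) • t, v, t, s, Int.emod_two_eq_zero_or_one k, hv, ht, ?_, ?_, ?_⟩
  · rw [mulVec_sub, mulVec_smul, ht, eq_sub_of_add_eq' hk, Int.emod_def]
    module
  · rw [map_sub, map_smul, LinearMap.sub_apply, LinearMap.smul_apply, sympForm_isAlt.eq_iff.1 hvt,
      hw, hcv, smul_zero, sub_zero]
  · rw [hs, hdt]

theorem isSp4ZConj_of_mul_self_eq_one {γ : M4} (hγ : γ ∈ Sp4Z) (hsq : γ * γ = 1) (hne : γ ≠ 1)
    (hne' : γ ≠ -1) : IsSp4ZConj γ zetaM ∨ IsSp4ZConj γ (zetaM * Hmat 0 1 0) := by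
  obtain ⟨ε, w, v, t, s, hε, hv, ht, hw, hwv, hst⟩ := exists_adapted_vectors hγ hsq hne hne'
  have hconj := isSp4ZConj_zetaM_mul_Hmat hγ hsq hv ht hw hwv hst
  obtain rfl | rfl := hε
  · have hH : zetaM * Hmat 0 0 0 = zetaM := by decide
    exact Or.inl (hH ▸ hconj)
  · exact Or.inr hconj

/-- Every finite-order element γ ≠ I₄ of Γ₆^bil is conjugate within Sp(4,ℤ)
to ζ or to ζ·[0,1;0]. -/
theorem torsion_conjugate (γ : M4) (hγ : γ ∈ Gamma6bil) (hne : γ ≠ 1)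
    (hfin : ∃ n : ℕ, 1 ≤ n ∧ γ ^ n = 1) :
    ∃ δ δ' : M4, δ ∈ Sp4Z ∧ δ * δ' = 1 ∧ δ' * δ = 1 ∧
      (δ * γ * δ' = zetaM ∨ δ * γ * δ' = zetaM * Hmat 0 1 0) := by
  have hsq : γ * γ = 1 := by
    rw [← sq]
    exact sq_eq_one_of_mem_Gamma6bil hγ (isOfFinOrder_iff_pow_eq_one.2 hfin)
  have hne' : γ ≠ -1 := fun h ↦ neg_one_notMem_Gamma6bil (h ▸ hγ)
  obtain ⟨δ, δ', hδ, hδδ', hδ'δ, h⟩ | ⟨δ, δ', hδ, hδδ', hδ'δ, h⟩ :=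
    isSp4ZConj_of_mul_self_eq_one (Gamma6bil_subset_Sp4Z hγ) hsq hne hne'
  · exact ⟨δ, δ', hδ, hδδ', hδ'δ, Or.inl h⟩
  · exact ⟨δ, δ', hδ, hδδ', hδ'δ, Or.inr h⟩
end
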